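/- Let d ≥ 2 and 1 ≤ ω ≤ d be integers, let D ≥ 0 be an integer, let V be a set, and let c be a 2-coloring of the complete digraph on V with c(v,v) = red for all v ∈ V. Suppose that every subset U ⊆ V containing no blue clique of size ω can be covered by at most D red d-dominating sets within U. If V contains no blue clique of size ω + 1, then V can be covered by at most d(D + 1) red d-dominating sets. -/

import Mathlib

/-- The two colors for 2-colorings of complete digraphs. -/
inductive Color where
  | red : Color
  | blue : Color

/-- `U'` is a red `d`-dominating set: every finite `S ⊆ U'` with `1 ≤ |S| ≤ d` has a
common red out-neighbor inside `U'`. -/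
def IsRedDom {V : Type*} (c : V → V → Color) (d : ℕ) (U' : Set V) : Prop :=
  ∀ S : Finset V, ↑S ⊆ U' → S.Nonempty → S.card ≤ d →
    ∃ w ∈ U', ∀ s ∈ S, c s w = Color.red

/-- `A` has a blue clique of size `k`: `k` vertices of `A` pairwise joined by blue
edges in both directions. -/
def HasBlueClique {V : Type*} (c : V → V → Color) (k : ℕ) (A : Set V) : Prop :=
  ∃ X : Finset V, ↑X ⊆ A ∧ X.card = k ∧
    ∀ u ∈ X, ∀ v ∈ X, u ≠ v → c u v = Color.blue ∧ c v u = Color.blue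

/-- `A` can be covered by at most `D` red `d`-dominating sets. -/
def RedDomCover {V : Type*} (c : V → V → Color) (d D : ℕ) (A : Set V) : Prop :=
  ∃ n : ℕ, n ≤ D ∧ ∃ W : Fin n → Set V,
    (⋃ i, W i) = A ∧ ∀ i, IsRedDom c d (W i)

/-!
If `V` is not itself red `d`-dominating, some `S ⊆ V` with at most `d` elements has no common red
out-neighbor, so every vertex `v` receives a blue edge from some `s ∈ S`. The edge from `v` back to
that `s` is either red or blue. For fixed `s`, the vertices with a red edge to `s` form a single red
`d`-dominating set, because `s` is among them and dominates them all. The vertices joined to `s` by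
blue edges in both directions contain no blue clique of size `ω`, since `s` would extend it, and so
they are covered by `D` red `d`-dominating sets.
-/

theorem Color.ne_red_iff {x : Color} : x ≠ Color.red ↔ x = Color.blue := by
  cases x <;> simp

section Covers

variable {V : Type*} {c : V → V → Color} {d : ℕ} {A : Set V}

theorem RedDomCover.of_fintype {ι : Type*} [Fintype ι] {D : ℕ} {W : ι → Set V}
    (hW : ∀ i, IsRedDom c d (W i)) (hcard : Fintype.card ι ≤ D) :
    RedDomCover c d D (⋃ i, W i) := by
  let e := Fintype.equivFin ι
  exact ⟨Fintype.card ι, hcard, W ∘ e.symm, e.symm.surjective.iUnion_comp W,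
    fun i => hW (e.symm i)⟩

theorem RedDomCover.mono {D D' : ℕ} (h : RedDomCover c d D A) (hD : D ≤ D') :
    RedDomCover c d D' A :=
  h.imp fun _ ⟨hn, hW⟩ => ⟨hn.trans hD, hW⟩

theorem IsRedDom.redDomCover (h : IsRedDom c d A) : RedDomCover c d 1 A :=
  ⟨1, le_rfl, fun _ => A, Set.iUnion_const A, fun _ => h⟩

theorem RedDomCover.union {D₁ D₂ : ℕ} {B : Set V} (hA : RedDomCover c d D₁ A)
    (hB : RedDomCover c d D₂ B) : RedDomCover c d (D₁ + D₂) (A ∪ B) := by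
  obtain ⟨m, hm, W, rfl, hW⟩ := hA
  obtain ⟨n, hn, W', rfl, hW'⟩ := hB
  have hcover := RedDomCover.of_fintype (W := Sum.elim W W') (Sum.forall.2 ⟨hW, hW'⟩)
    (by simpa using add_le_add hm hn)
  simpa only [Set.iUnion_sumElim] using hcover

theorem RedDomCover.biUnion {ι : Type*} {D : ℕ} {S : Finset ι} {B : ι → Set V}
    (hB : ∀ i ∈ S, RedDomCover c d D (B i)) :
    RedDomCover c d (S.card * D) (⋃ i ∈ S, B i) := by
  classical
  induction S using Finset.induction_on with
  | empty => exact ⟨0, by simp, Fin.elim0, by simp, fun i => i.elim0⟩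
  | insert i S hi ih =>
    rw [Finset.set_biUnion_insert, Finset.card_insert_of_notMem hi, Nat.succ_mul, Nat.add_comm]
    exact (hB i (Finset.mem_insert_self i S)).union
      (ih fun j hj => hB j (Finset.mem_insert_of_mem hj))

end Covers

section Neighborhoods

variable {V : Type*} {c : V → V → Color} {d : ℕ} {A : Set V}

/-- The red in-neighborhood of `v` within `A`. -/
def redInNeighbors (c : V → V → Color) (A : Set V) (v : V) : Set V :=
  {u ∈ A | c u v = Color.red}

/-- The blue neighborhood of `v` within `A` that is relevant for blue cliques: the vertices joined
to `v` by blue edges in both directions. -/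
def mutualBlueNeighbors (c : V → V → Color) (A : Set V) (v : V) : Set V :=
  {u ∈ A | c v u = Color.blue ∧ c u v = Color.blue}

theorem isRedDom_redInNeighbors {v : V} (hvA : v ∈ A) (hv : c v v = Color.red) :
    IsRedDom c d (redInNeighbors c A v) :=
  fun _ hS _ _ => ⟨v, ⟨hvA, hv⟩, fun _ hs => (hS hs).2⟩

theorem HasBlueClique.of_mutualBlueNeighbors {k : ℕ} {v : V} (hvA : v ∈ A)
    (hv : c v v = Color.red) (h : HasBlueClique c k (mutualBlueNeighbors c A v)) :
    HasBlueClique c (k + 1) A := by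
  classical
  obtain ⟨X, hXv, rfl, hX⟩ := h
  have hvX : v ∉ X := fun hmem => Color.ne_red_iff.2 (hXv hmem).2.1 hv
  refine ⟨insert v X, ?_, Finset.card_insert_of_notMem hvX, ?_⟩
  · rw [Finset.coe_insert]
    exact Set.insert_subset hvA fun u hu => (hXv hu).1
  · intro u hu w hw huw
    rcases Finset.mem_insert.1 hu with rfl | huX <;> rcases Finset.mem_insert.1 hw with rfl | hwX
    · exact absurd rfl huw
    · exact (hXv hwX).2
    · exact (hXv huX).2.symm
    · exact hX u huX w hwX huw

theorem exists_biUnion_neighbors_eq_of_not_isRedDom (h : ¬ IsRedDom c d A) :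
    ∃ S : Finset V, ↑S ⊆ A ∧ S.card ≤ d ∧
      ⋃ s ∈ S, (redInNeighbors c A s ∪ mutualBlueNeighbors c A s) = A := by
  unfold IsRedDom at h
  push Not at h
  obtain ⟨S, hSA, -, hcard, hS⟩ := h
  refine ⟨S, hSA, hcard, Set.Subset.antisymm ?_ fun v hvA => ?_⟩
  · exact Set.iUnion₂_subset fun s _ => Set.union_subset (Set.sep_subset A _) (Set.sep_subset A _)
  · obtain ⟨s, hs, hsv⟩ := hS v hvA
    refine Set.mem_biUnion hs ?_
    by_cases hvs : c v s = Color.red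
    · exact Or.inl ⟨hvA, hvs⟩
    · exact Or.inr ⟨hvA, Color.ne_red_iff.1 hsv, Color.ne_red_iff.1 hvs⟩

end Neighborhoods

theorem recursion_lemma_general {V : Type*} {c : V → V → Color} {A : Set V} {d ω D : ℕ}
    (hd : 1 ≤ d) (hloop : ∀ v ∈ A, c v v = Color.red)
    (hind : ∀ U ⊆ A, ¬ HasBlueClique c ω U → RedDomCover c d D U)
    (hA : ¬ HasBlueClique c (ω + 1) A) :
    RedDomCover c d (d * (D + 1)) A := by
  by_cases hdom : IsRedDom c d A
  · exact hdom.redDomCover.mono (Nat.mul_pos hd D.succ_pos)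
  obtain ⟨S, hSA, hcard, hcover⟩ := exists_biUnion_neighbors_eq_of_not_isRedDom hdom
  have hlocal : ∀ s ∈ S, RedDomCover c d (D + 1)
      (redInNeighbors c A s ∪ mutualBlueNeighbors c A s) := by
    intro s hs
    have hred : RedDomCover c d 1 (redInNeighbors c A s) :=
      (isRedDom_redInNeighbors (hSA hs) (hloop s (hSA hs))).redDomCover
    have hblue : RedDomCover c d D (mutualBlueNeighbors c A s) :=
      hind _ (Set.sep_subset A _) fun hclique =>
        hA (hclique.of_mutualBlueNeighbors (hSA hs) (hloop s (hSA hs)))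
    exact (hred.union hblue).mono (Nat.add_comm 1 D).le
  rw [← hcover]
  exact (RedDomCover.biUnion hlocal).mono (Nat.mul_le_mul_right (D + 1) hcard)

/-- Lemma (recursion `f(ω,d) ≤ d(f(ω-1,d)+1)`): if all loops are red, every subset
with no blue clique of size `ω` can be covered by at most `D` red `d`-dominating sets,
and `V` has no blue clique of size `ω+1`, then `V` can be covered by at most
`d(D+1)` red `d`-dominating sets. -/
theorem recursion_lemma {V : Type*} (d ω D : ℕ) (hd : 2 ≤ d)
    (hω₁ : 1 ≤ ω) (hωd : ω ≤ d)
    (c : V → V → Color)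
    (hloop : ∀ v : V, c v v = Color.red)
    (hind : ∀ U : Set V, ¬ HasBlueClique c ω U → RedDomCover c d D U)
    (hV : ¬ HasBlueClique c (ω + 1) (Set.univ : Set V)) :
    RedDomCover c d (d * (D + 1)) (Set.univ : Set V) :=
  recursion_lemma_general (Nat.one_le_of_lt hd) (fun v _ => hloop v) (fun U _ => hind U) hV
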